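/- Let C ⊂ ℙ²(ℂ) be the nodal cubic defined by x³ + x²z − y²z = 0, whose unique singular point is the node (0:0:1), and let C⁰ = C \ {(0:0:1)} be its set of smooth points. Then there exists a bijection φ : ℂ* → C⁰ such that for all pairwise distinct s, t, u ∈ ℂ*, the three points φ(s), φ(t), φ(u) are collinear if and only if s·t·u = 1. (Thus the collinearity relation makes C⁰ a group isomorphic to the multiplicative group ℂ*.) -/

import Mathlib

/-- The complex projective plane ℙ²(ℂ) = ℙ(ℂ³). -/
abbrev P2 : Type := Projectivization ℂ (Fin 3 → ℂ)

/-- Three points of ℙ²(ℂ) are collinear if representative vectors in ℂ³ span a linear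
subspace of dimension at most 2. -/
def Collin (p q r : P2) : Prop :=
  Module.finrank ℂ (Submodule.span ℂ {p.rep, q.rep, r.rep} : Submodule ℂ (Fin 3 → ℂ)) ≤ 2

lemma vec_ne_zero {a b c : ℂ} (h : a ≠ 0 ∨ b ≠ 0 ∨ c ≠ 0) : ![a, b, c] ≠ 0 := by
  intro hz
  rcases h with h | h | h
  · exact h (by simpa using congrFun hz 0)
  · exact h (by simpa using congrFun hz 1)
  · exact h (by simpa using congrFun hz 2)

/-- The nodal cubic x³ + x²z − y²z = 0 in ℙ²(ℂ). -/
def nodalCubic : Set P2 :=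
  {p | p.rep 0 ^ 3 + p.rep 0 ^ 2 * p.rep 2 - p.rep 1 ^ 2 * p.rep 2 = 0}

/-- The node (0:0:1) of the nodal cubic. -/
noncomputable def nodePt : P2 := Projectivization.mk ℂ ![0, 0, 1] (vec_ne_zero (Or.inr (Or.inr one_ne_zero)))

/-- The vector giving the parametrization. -/
def parVec (t : ℂ) : Fin 3 → ℂ := ![4 * t * (t - 1), 4 * t * (t + 1), (t - 1) ^ 3]

lemma parVec_ne (t : ℂˣ) : parVec t ≠ 0 := by
  intro h
  have h0 : 4 * (t : ℂ) * (t - 1) = 0 := by simpa [parVec] using congrFun h 0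
  have h1 : 4 * (t : ℂ) * (t + 1) = 0 := by simpa [parVec] using congrFun h 1
  have : (t : ℂ) = 0 := by linear_combination (h1 - h0) / 8
  exact t.ne_zero this

/-- The parametrization of the smooth points. -/
noncomputable def par (t : ℂˣ) : P2 := Projectivization.mk ℂ (parVec t) (parVec_ne t)

lemma par_rep (t : ℂˣ) : ∃ c : ℂ, c ≠ 0 ∧ (par t).rep = c • parVec t := by
  obtain ⟨a, ha⟩ := Projectivization.exists_smul_eq_mk_rep ℂ (parVec t) (parVec_ne t)
  exact ⟨a, a.ne_zero, ha.symm⟩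

lemma collin_iff (p q r : P2) :
    Collin p q r ↔ (Matrix.of ![p.rep, q.rep, r.rep]).det = 0 := by
  have h1 : LinearIndependent ℂ ![p.rep, q.rep, r.rep] ↔
      (Matrix.of ![p.rep, q.rep, r.rep]).det ≠ 0 := by
    rw [← isUnit_iff_ne_zero, ← Matrix.isUnit_iff_isUnit_det,
      ← Matrix.linearIndependent_rows_iff_isUnit]
    rfl
  have h2 := linearIndependent_iff_card_le_finrank_span (R := ℂ) (b := ![p.rep, q.rep, r.rep])
  have h3 : Set.range ![p.rep, q.rep, r.rep] = {p.rep, q.rep, r.rep} := by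
    simp only [Matrix.range_cons, Matrix.range_empty, Set.insert_eq, Set.union_empty]
  rw [Set.finrank, h3, h1] at h2
  unfold Collin
  simp only [Fintype.card_fin] at h2
  rw [← not_iff_not, ← ne_eq, h2]
  omega

/-- There is a bijection φ : ℂ* → C⁰ from the multiplicative group ℂ* onto
the set of smooth points of the nodal cubic such that for pairwise distinct s, t, u the
points φ s, φ t, φ u are collinear iff s·t·u = 1. -/
theorem nodal_cubic_group_law :
    ∃ φ : ℂˣ → P2, Function.Injective φ ∧ Set.range φ = nodalCubic \ {nodePt} ∧
      ∀ s t u : ℂˣ, s ≠ t → s ≠ u → t ≠ u →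
        (Collin (φ s) (φ t) (φ u) ↔ s * t * u = 1) := by
  refine ⟨par, ?_, ?_, ?_⟩
  · intro s t h
    obtain ⟨c, hc⟩ := (Projectivization.mk_eq_mk_iff' ℂ _ _ (parVec_ne s) (parVec_ne t)).1 h
    have h0 : c * (4 * (t : ℂ) * (t - 1)) = 4 * s * (s - 1) := by
      simpa [parVec] using congrFun hc 0
    have h1 : c * (4 * (t : ℂ) * (t + 1)) = 4 * s * (s + 1) := by
      simpa [parVec] using congrFun hc 1
    have e1 : c * t = s := by linear_combination (h1 - h0) / 8
    have e2 : c * t * t = s * s := by linear_combination (h1 + h0) / 8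
    rw [e1] at e2
    exact Units.ext (mul_left_cancel₀ s.ne_zero e2).symm
  · ext p
    constructor
    · rintro ⟨t, rfl⟩
      refine ⟨?_, ?_⟩
      · obtain ⟨c, -, hr⟩ := par_rep t
        simp only [nodalCubic, Set.mem_ofPred_eq, hr]
        simp [parVec]
        ring
      · intro h
        obtain ⟨c, hc⟩ := (Projectivization.mk_eq_mk_iff' ℂ _ _ (parVec_ne t) _).1 h
        have h0 : 0 = 4 * (t : ℂ) * (t - 1) := by
          simpa only [parVec, Pi.smul_apply, smul_eq_mul, Matrix.cons_val_zero, mul_zero] using congrFun hc 0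
        have h1 : 0 = 4 * (t : ℂ) * (t + 1) := by
          simpa only [parVec, Pi.smul_apply, smul_eq_mul, Matrix.cons_val_one, Matrix.cons_val_zero, mul_zero] using congrFun hc 1
        exact t.ne_zero (by linear_combination (h0 - h1) / 8)
    · rintro ⟨hp, hn⟩
      simp only [nodalCubic, Set.mem_ofPred_eq] at hp
      have key : ¬ (p.rep 0 = 0 ∧ p.rep 1 = 0) := by
        rintro ⟨a0, a1⟩
        apply hn
        rw [Set.mem_singleton_iff, ← p.mk_rep, nodePt, Projectivization.mk_eq_mk_iff']
        refine ⟨p.rep 2, ?_⟩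
        ext i
        fin_cases i <;> simp [a0, a1]
      have hm : p.rep 1 - p.rep 0 ≠ 0 := by
        intro h
        have h0 : p.rep 0 = 0 := by
          apply pow_eq_zero_iff (n := 3) (by norm_num) |>.1
          linear_combination hp + (p.rep 1 + p.rep 0) * p.rep 2 * h
        exact key ⟨h0, by linear_combination h + h0⟩
      have hq : p.rep 1 + p.rep 0 ≠ 0 := by
        intro h
        have h0 : p.rep 0 = 0 := by
          apply pow_eq_zero_iff (n := 3) (by norm_num) |>.1
          linear_combination hp + (p.rep 1 - p.rep 0) * p.rep 2 * h
        exact key ⟨h0, by linear_combination h - h0⟩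
      refine ⟨Units.mk0 _ (div_ne_zero hq hm), ?_⟩
      conv_rhs => rw [← p.mk_rep]
      rw [par, Projectivization.mk_eq_mk_iff']
      refine ⟨8 * (p.rep 1 + p.rep 0) / (p.rep 1 - p.rep 0) ^ 2, ?_⟩
      ext i
      fin_cases i
      · simp [parVec]
        field_simp
        ring
      · simp [parVec]
        field_simp
        ring
      · simp [parVec]
        field_simp
        linear_combination (-8) * hp
  · intro s t u hst hsu htu
    obtain ⟨a, ha, ra⟩ := par_rep s
    obtain ⟨b, hb, rb⟩ := par_rep t
    obtain ⟨c, hc, rc⟩ := par_rep u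
    rw [collin_iff, ra, rb, rc]
    have e : (Matrix.of ![a • parVec s, b • parVec t, c • parVec u]).det =
        (-32) * a * b * c * (s * t * u - 1) * ((t - s) * (u - s) * (u - t)) := by
      simp [Matrix.det_fin_three, parVec]
      ring
    have n1 : (t - s : ℂ) ≠ 0 := sub_ne_zero.2 fun h => hst (Units.ext h.symm)
    have n2 : (u - s : ℂ) ≠ 0 := sub_ne_zero.2 fun h => hsu (Units.ext h.symm)
    have n3 : (u - t : ℂ) ≠ 0 := sub_ne_zero.2 fun h => htu (Units.ext h.symm)
    rw [e, Units.ext_iff]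
    simp [ha, hb, hc, n1, n2, n3, sub_eq_zero]
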